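/- For fixed t > 1, let 𝓛₁ and 𝓛₂ be two sets of t lines in the plane and P₀ = {ℓ₁ ∩ ℓ₂ : ℓ₁ ∈ 𝓛₁, ℓ₂ ∈ 𝓛₂} with |P₀| = t². Then there is a constant c = c(t) such that any arrangement of m points and n lines in the plane whose incidence graph contains no subconfiguration isomorphic to (P₀, 𝓛₁ ∪ 𝓛₂) has at most c(m^{(2t−2)/(3t−2)} n^{(2t−1)/(3t−2)} + m^{1 + 1/(6t−3)} + n) incidences. -/

import Mathlib

/-- The point `p` lies on the (non-vertical) line `l = (slope, intercept)`. -/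
def PtOnLine (p l : ℝ × ℝ) : Prop := p.2 = l.1 * p.1 + l.2

/-- `(P, L)` contains a subconfiguration isomorphic to `(P₀, L₀)`: there are injections
of the points and of the lines preserving incidences and non-incidences. -/
def ContainsConfig (P L P₀ L₀ : Finset (ℝ × ℝ)) : Prop :=
  ∃ f g : ℝ × ℝ → ℝ × ℝ,
    Set.InjOn f ↑P₀ ∧ Set.InjOn g ↑L₀ ∧
    (∀ p ∈ P₀, f p ∈ P) ∧ (∀ l ∈ L₀, g l ∈ L) ∧
    ∀ p ∈ P₀, ∀ l ∈ L₀, (PtOnLine p l ↔ PtOnLine (f p) (g l))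

/-!
Start with a crude bound for arrangements in which no two sets of `t` lines span a grid. Say that a
line `b` follows a line `a` if, among the lines through some point of the arrangement, `b` is the
next one by slope. Every point on `d > 0` lines contributes `d - 1` such pairs, and distinct points
contribute distinct pairs. If `t` lines had more than `t³` common followers, then `t` of the
followers would meet those lines in `t²` distinct points, a grid. So the graph of followers has no
`K_{t, t³ + 1}`, and by Kővári–Sós–Turán `m` points and `n` lines without a grid determine at most
`m + O(n ^ (2 - 1/t))` incidences.

To amplify this, sweep the plane by lines of increasing slope. Rotating the sweep direction permutes
the ranks of the points, and as each pair of points is exchanged at most once the ranks move by at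
most `m²` in total. Hence for some shift the levels spaced `q` apart are crossed at most `m² / q`
times altogether. Cutting the strips between levels after every `q` crossings sorts the lines that
contain at most `q` points into `O(m² / q²)` cells, each of which involves only `3q` points; the
remaining lines carry at most `m² / q` incidences. This plays the part of a simplicial partition of
the dual arrangement. Applying the crude bound within the cells and optimizing `q` gives the result,
with `m` in place of `m ^ (1 + 1 / (6t - 3))`.
-/

open Finset

section Counting

variable {α β : Type*}

lemma card_le_card_consecutive_pairs_add_one {γ : Type*} [LinearOrder γ] (s : Finset α)
    {f : α → γ} (hf : Set.InjOn f s) :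
    #s ≤ #{x ∈ s ×ˢ s | f x.1 < f x.2 ∧ ∀ c ∈ s, f c ≤ f x.1 ∨ f x.2 ≤ f c} + 1 := by
  classical
  rcases s.eq_empty_or_nonempty with rfl | hs
  · simp
  obtain ⟨m, hm, hmax⟩ := s.exists_max_image f hs
  have hsucc : s.erase m ⊆ image Prod.fst
      {x ∈ s ×ˢ s | f x.1 < f x.2 ∧ ∀ c ∈ s, f c ≤ f x.1 ∨ f x.2 ≤ f c} := by
    intro a ha
    obtain ⟨ham, ha⟩ := mem_erase.1 ha
    have hlt : f a < f m := (hmax a ha).lt_of_ne fun h => ham (hf ha hm h)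
    obtain ⟨b, hb, hmin⟩ := exists_min_image {c ∈ s | f a < f c} f ⟨m, by simp [hm, hlt]⟩
    rw [mem_filter] at hb
    refine mem_image.2 ⟨(a, b), mem_filter.2 ⟨mk_mem_product ha hb.1, hb.2, fun c hc => ?_⟩, rfl⟩
    exact (le_or_gt (f c) (f a)).imp_right fun h => hmin c (mem_filter.2 ⟨hc, h⟩)
  rw [← card_erase_add_one hm]
  exact Nat.add_le_add_right ((card_le_card hsucc).trans card_image_le) 1

lemma exists_pairwise_not_and_card_le_mul (s : Finset α) (R : α → α → Prop) [DecidableRel R]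
    (hrefl : ∀ x ∈ s, R x x) (hsymm : ∀ x y, R x y → R y x) {D : ℕ}
    (hD : ∀ x ∈ s, #{y ∈ s | R x y} ≤ D) :
    ∃ s' ⊆ s, (s' : Set α).Pairwise (fun x y => ¬ R x y) ∧ #s ≤ #s' * D := by
  classical
  obtain ⟨s', hs', hmax⟩ := exists_max_image
    (s.powerset.filter fun s' : Finset α => (s' : Set α).Pairwise fun x y => ¬ R x y) card
    ⟨∅, by simp⟩
  obtain ⟨hsub, hpair⟩ := mem_filter.1 hs'
  rw [mem_powerset] at hsub
  refine ⟨s', hsub, hpair, ?_⟩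
  have hdom : s ⊆ s'.biUnion fun x => {y ∈ s | R x y} := by
    intro y hy
    simp only [mem_biUnion, mem_filter]
    by_contra! hfree
    have hy' : y ∉ s' := fun h => hfree y h hy (hrefl y hy)
    have hins : insert y s' ∈
        s.powerset.filter fun s' : Finset α => (s' : Set α).Pairwise fun x y => ¬ R x y := by
      rw [mem_filter, mem_powerset, coe_insert]
      refine ⟨insert_subset hy hsub, hpair.insert fun x hx _ => ⟨?_, hfree x hx hy⟩⟩
      exact fun h => hfree x hx hy (hsymm y x h)
    have := hmax _ hins
    rw [card_insert_of_notMem hy'] at this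
    omega
  exact (card_le_card hdom).trans (card_biUnion_le_card_mul _ _ _ fun x hx => hD x (hsub hx))

lemma exists_subset_injOn_product_and_card_le {γ : Type*} (A : Finset α) (B : Finset β)
    (X : α × β → γ) (hA : A.Nonempty)
    (hfst : ∀ a ∈ A, ∀ b ∈ B, ∀ b' ∈ B, X (a, b) = X (a, b') → b = b')
    (hsnd : ∀ a ∈ A, ∀ a' ∈ A, ∀ b ∈ B, X (a, b) = X (a', b) → a = a') :
    ∃ B' ⊆ B, Set.InjOn X ↑(A ×ˢ B') ∧ #B ≤ #B' * #A ^ 2 := by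
  classical
  set R : β → β → Prop := fun b b' => ∃ a ∈ A, ∃ a' ∈ A, X (a, b) = X (a', b')
  have hdegree : ∀ b ∈ B, #{b' ∈ B | R b b'} ≤ #A ^ 2 := fun b _ => by
    have hcover : {b' ∈ B | R b b'} ⊆
        (A ×ˢ A).biUnion fun x => {b' ∈ B | X (x.1, b) = X (x.2, b')} := fun b' hb' => by
      obtain ⟨hb', a, ha, a', ha', h⟩ := mem_filter.1 hb'
      exact mem_biUnion.2 ⟨(a, a'), mk_mem_product ha ha', mem_filter.2 ⟨hb', h⟩⟩
    rw [sq, ← card_product, ← mul_one #(A ×ˢ A)]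
    refine (card_le_card hcover).trans (card_biUnion_le_card_mul _ _ _ fun x hx =>
      card_le_one.2 fun c hc c' hc' => ?_)
    rw [mem_filter] at hc hc'
    exact hfst x.2 (mem_product.1 hx).2 c hc.1 c' hc'.1 (hc.2.symm.trans hc'.2)
  obtain ⟨B', hB', hpair, hcard⟩ := exists_pairwise_not_and_card_le_mul B R
    (fun b _ => let ⟨a, ha⟩ := hA; ⟨a, ha, a, ha, rfl⟩)
    (fun b b' ⟨a, ha, a', ha', h⟩ => ⟨a', ha', a, ha, h.symm⟩) hdegree
  refine ⟨B', hB', ?_, hcard⟩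
  rintro ⟨a, b⟩ hx ⟨a', b'⟩ hx' h
  obtain ⟨ha, hb⟩ := mem_product.1 hx
  obtain ⟨ha', hb'⟩ := mem_product.1 hx'
  obtain rfl : b = b' := by_contra fun hne => hpair hb hb' hne ⟨a, ha, a', ha', h⟩
  rw [hsnd a ha a' ha' b (hB' hb) h]

lemma sum_le_one_add_card_div_mul (s : Finset α) (f : α → ℝ) {g : ℕ} (hg : 0 < g) {F : ℝ}
    (h : ∀ s' ⊆ s, #s' ≤ g → ∑ a ∈ s', f a ≤ F) :
    ∑ a ∈ s, f a ≤ (1 + (#s : ℝ) / g) * F := by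
  classical
  have hF : 0 ≤ F := by simpa using h ∅ (empty_subset s) (by simp)
  induction s using Finset.strongInduction with
  | H s ih =>
    rcases le_or_gt (#s) g with hle | hlt
    · calc ∑ a ∈ s, f a ≤ 1 * F := by rw [one_mul]; exact h s Subset.rfl hle
        _ ≤ (1 + (#s : ℝ) / g) * F := by gcongr; exact le_add_of_nonneg_right (by positivity)
    · obtain ⟨s', hs', hcard⟩ := exists_subset_card_eq hlt.le
      have hss : s \ s' ⊂ s := sdiff_ssubset hs' (card_pos.1 (hcard ▸ hg))
      have hrest := ih (s \ s') hss fun s'' hs'' => h s'' (hs''.trans hss.1)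
      rw [card_sdiff_of_subset hs', hcard, Nat.cast_sub hlt.le, sub_div,
        div_self (by positivity)] at hrest
      have hfirst := h s' hs' hcard.le
      rw [← sum_sdiff hs']
      linarith

lemma card_filter_not_iff_succ_le_one {A : ℕ → Prop} [DecidablePred A]
    (hA : Monotone A ∨ Antitone A) (N : ℕ) : #{a ∈ range N | ¬ (A a ↔ A (a + 1))} ≤ 1 := by
  have no_later : ∀ {a b}, a < b → ¬ (A a ↔ A (a + 1)) → (A b ↔ A (b + 1)) := by
    intro a b hab ha
    rcases hA with hA | hA
    · have h₁ : A a → A (a + 1) := hA a.le_succ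
      have h₂ : A (a + 1) → A b := hA hab
      have h₃ : A b → A (b + 1) := hA b.le_succ
      tauto
    · have h₁ : A (a + 1) → A a := hA a.le_succ
      have h₂ : A b → A (a + 1) := hA hab
      have h₃ : A (b + 1) → A b := hA b.le_succ
      tauto
  refine card_le_one.2 fun a ha b hb => ?_
  rw [mem_filter] at ha hb
  rcases lt_trichotomy a b with h | h | h
  · exact absurd (no_later h ha.2) hb.2
  · exact h
  · exact absurd (no_later h hb.2) ha.2

lemma dist_card_filter_le (s : Finset α) (p q : α → Prop) [DecidablePred p] [DecidablePred q] :
    Nat.dist #{x ∈ s | p x} #{x ∈ s | q x} ≤ #{x ∈ s | ¬ (p x ↔ q x)} := by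
  classical
  have hp : {x ∈ s | p x} ⊆ {x ∈ s | q x} ∪ {x ∈ s | ¬ (p x ↔ q x)} := by grind
  have hq : {x ∈ s | q x} ⊆ {x ∈ s | p x} ∪ {x ∈ s | ¬ (p x ↔ q x)} := by grind
  have hp' := (card_le_card hp).trans (card_union_le _ _)
  have hq' := (card_le_card hq).trans (card_union_le _ _)
  unfold Nat.dist
  omega

lemma sum_dist_card_filter_le (P : Finset α) (R : ℕ → α → α → Prop)
    [∀ a x y, Decidable (R a x y)]
    (hR : ∀ x y, Monotone (R · x y) ∨ Antitone (R · x y)) (N : ℕ) :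
    ∑ a ∈ range N, ∑ x ∈ P, Nat.dist #{y ∈ P | R a y x} #{y ∈ P | R (a + 1) y x} ≤ #P ^ 2 :=
  calc ∑ a ∈ range N, ∑ x ∈ P, Nat.dist #{y ∈ P | R a y x} #{y ∈ P | R (a + 1) y x}
      ≤ ∑ a ∈ range N, ∑ x ∈ P, #{y ∈ P | ¬ (R a y x ↔ R (a + 1) y x)} := by
        gcongr; exact dist_card_filter_le _ _ _
    _ = ∑ x ∈ P, ∑ y ∈ P, #{a ∈ range N | ¬ (R a y x ↔ R (a + 1) y x)} := by
        rw [sum_comm]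
        exact sum_congr rfl fun x _ =>
          sum_card_bipartiteAbove_eq_sum_card_bipartiteBelow _
    _ ≤ ∑ x ∈ P, ∑ y ∈ P, 1 := by
        gcongr with x _ y _; exact card_filter_not_iff_succ_le_one (hR y x) N
    _ = #P ^ 2 := by simp [sq]

lemma exists_monotone_enumeration [LinearOrder α] [Nonempty α] (s : Finset α) :
    ∃ (u : ℕ → α) (N : ℕ), Monotone u ∧ ∀ x ∈ s, ∃ a ≤ N, u a = x := by
  rcases s.eq_empty_or_nonempty with rfl | hs
  · exact ⟨fun _ => Classical.arbitrary α, 0, monotone_const, by simp⟩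
  obtain ⟨N, hN⟩ : ∃ N, #s = N + 1 := ⟨#s - 1, by have := hs.card_pos; omega⟩
  refine ⟨fun a => s.orderEmbOfFin hN (Fin.clamp a N), N,
    (s.orderEmbOfFin hN).monotone.comp Fin.clamp_monotone, fun x hx => ?_⟩
  obtain ⟨i, rfl⟩ : x ∈ Set.range (s.orderEmbOfFin hN) := by rwa [range_orderEmbOfFin]
  exact ⟨i, Nat.lt_succ_iff.1 i.2, congrArg _ (Fin.ext (Nat.min_eq_left (Nat.lt_succ_iff.1 i.2)))⟩

lemma natCast_le_natCast_rpow (n : ℕ) {x : ℝ} (hx : 1 ≤ x) : (n : ℝ) ≤ (n : ℝ) ^ x := by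
  rcases n.eq_zero_or_pos with rfl | hn
  · simpa using Real.rpow_nonneg le_rfl x
  · exact Real.self_le_rpow_of_one_le (mod_cast hn) hx

end Counting

section KovariSosTuran

variable {α β : Type*} (A : Finset α) (B : Finset β) (E : α → β → Prop)
  [∀ a b, Decidable (E a b)] {t T : ℕ}

lemma sum_choose_card_le_of_card_common_le
    (h : ∀ S ⊆ A, #S = t → #{b ∈ B | ∀ a ∈ S, E a b} ≤ T) :
    ∑ b ∈ B, (#{a ∈ A | E a b}).choose t ≤ (#A).choose t * T :=
  calc ∑ b ∈ B, (#{a ∈ A | E a b}).choose t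
      = ∑ b ∈ B, #{S ∈ powersetCard t A | ∀ a ∈ S, E a b} := by
        refine sum_congr rfl fun b _ => ?_
        rw [← card_powersetCard]
        congr 1
        ext
        simp only [mem_powersetCard, mem_filter, subset_iff]
        grind
    _ = ∑ S ∈ powersetCard t A, #{b ∈ B | ∀ a ∈ S, E a b} :=
        (sum_card_bipartiteAbove_eq_sum_card_bipartiteBelow _).symm
    _ ≤ #(powersetCard t A) • T := sum_le_card_nsmul _ _ _ fun _ hS =>
        h _ (mem_powersetCard.1 hS).1 (mem_powersetCard.1 hS).2
    _ = (#A).choose t * T := by rw [card_powersetCard, smul_eq_mul]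

lemma sum_pow_card_le_of_card_common_le
    (h : ∀ S ⊆ A, #S = t → #{b ∈ B | ∀ a ∈ S, E a b} ≤ T) :
    ∑ b ∈ B, (#{a ∈ A | E a b} + 1 - t) ^ t ≤ #A ^ t * T :=
  calc ∑ b ∈ B, (#{a ∈ A | E a b} + 1 - t) ^ t
      ≤ ∑ b ∈ B, t.factorial * (#{a ∈ A | E a b}).choose t := sum_le_sum fun b _ => by
        rw [← Nat.descFactorial_eq_factorial_mul_choose]
        exact Nat.pow_sub_le_descFactorial _ t
    _ ≤ t.factorial * ((#A).choose t * T) := by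
        rw [← mul_sum]; gcongr; exact sum_choose_card_le_of_card_common_le A B E h
    _ = (#A).descFactorial t * T := by
        rw [Nat.descFactorial_eq_factorial_mul_choose, mul_assoc]
    _ ≤ #A ^ t * T := by gcongr; exact Nat.descFactorial_le_pow _ _

/-- The **Kővári–Sós–Turán theorem** for bipartite graphs. -/
theorem card_edges_le_of_card_common_le (ht : 0 < t)
    (h : ∀ S ⊆ A, #S = t → #{b ∈ B | ∀ a ∈ S, E a b} ≤ T) :
    (#{x ∈ A ×ˢ B | E x.1 x.2} : ℝ) ≤
      (T : ℝ) ^ (t : ℝ)⁻¹ * #A * (#B : ℝ) ^ (1 - (t : ℝ)⁻¹) + t * #B := by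
  set S : ℕ := ∑ b ∈ B, (#{a ∈ A | E a b} + 1 - t) with hS
  have hpow : (S : ℝ) ^ t ≤ (#B : ℝ) ^ (t - 1) * (#A ^ t * T) := by
    obtain ⟨n, rfl⟩ : ∃ n, t = n + 1 := ⟨t - 1, by omega⟩
    have hsum : ∑ b ∈ B, ((#{a ∈ A | E a b} + 1 - (n + 1) : ℕ) : ℝ) ^ (n + 1) ≤
        #A ^ (n + 1) * T := mod_cast sum_pow_card_le_of_card_common_le A B E h
    calc (S : ℝ) ^ (n + 1)
        ≤ (#B : ℝ) ^ n * ∑ b ∈ B, ((#{a ∈ A | E a b} + 1 - (n + 1) : ℕ) : ℝ) ^ (n + 1) := by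
          rw [hS, Nat.cast_sum]
          exact pow_sum_le_card_mul_sum_pow (fun _ _ => by positivity) n
      _ ≤ (#B : ℝ) ^ n * (#A ^ (n + 1) * T) := by gcongr
  have hroot : (S : ℝ) ≤ (T : ℝ) ^ (t : ℝ)⁻¹ * #A * (#B : ℝ) ^ (1 - (t : ℝ)⁻¹) := by
    refine le_of_pow_le_pow_left₀ ht.ne' (by positivity) (hpow.trans_eq ?_)
    have hexp : (1 - (t : ℝ)⁻¹) * t = ((t - 1 : ℕ) : ℝ) := by
      rw [Nat.cast_pred ht]; field_simp
    rw [mul_pow, mul_pow, Real.rpow_inv_natCast_pow (by positivity) ht.ne',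
      ← Real.rpow_mul_natCast (by positivity), hexp, Real.rpow_natCast]
    ring
  have hedges : #{x ∈ A ×ˢ B | E x.1 x.2} ≤ S + t * #B :=
    calc #{x ∈ A ×ˢ B | E x.1 x.2} = ∑ b ∈ B, #{a ∈ A | E a b} := by
          simp only [card_filter, sum_product_right]
      _ ≤ ∑ b ∈ B, (#{a ∈ A | E a b} + 1 - t + t) := sum_le_sum fun b _ => by omega
      _ = S + t * #B := by rw [sum_add_distrib, sum_const, smul_eq_mul, mul_comm t]
  calc (#{x ∈ A ×ˢ B | E x.1 x.2} : ℝ) ≤ S + t * #B := mod_cast hedges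
    _ ≤ _ := by gcongr

end KovariSosTuran

section Levels

lemma card_separating_multiples_le (q K r s : ℕ) :
    #{x ∈ range q ×ˢ range K | ¬ (r + x.1 < x.2 * q ↔ s + x.1 < x.2 * q)} ≤ Nat.dist r s := by
  have hdist : #(Ioc (min r s) (max r s)) = Nat.dist r s := by
    rw [Nat.card_Ioc, Nat.dist]; omega
  rw [← hdist]
  apply card_le_card_of_injOn fun x => x.2 * q - x.1
  · rintro ⟨j, k⟩ hx
    have hsep := (mem_filter.1 hx).2
    rw [mem_coe, mem_Ioc]
    grind
  · rintro ⟨j, k⟩ hx ⟨j', k'⟩ hx' h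
    simp only [coe_filter, mem_product, mem_range, Set.mem_ofPred_eq] at hx hx' h
    have hlt : ∀ {a b}, a < b → a * q + q ≤ b * q := fun hab => by
      rw [← Nat.succ_mul]; exact Nat.mul_le_mul_right q hab
    rcases lt_trichotomy k k' with hk | rfl | hk
    · have := hlt hk; omega
    · rw [show j = j' by omega]
    · have := hlt hk; omega

variable {α : Type*}

/-- The elements `p` of `P` whose rank `r a p` at time `a` and rank `r (a + 1) p` at time `a + 1`
lie on different sides of the level `c`. Elements of rank exactly `c` count as lying above. -/
def levelCrossings (P : Finset α) (r : ℕ → α → ℕ) (c a : ℕ) : Finset α :=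
  {p ∈ P | ¬ (r a p < c ↔ r (a + 1) p < c)}

lemma exists_shift_mul_sum_card_levelCrossings_le (P : Finset α) (r : ℕ → α → ℕ) (N K : ℕ)
    {q : ℕ} (hq : 0 < q) :
    ∃ j < q, q * ∑ k ∈ range K, ∑ a ∈ range N,
        #(levelCrossings P (fun a p => r a p + j) (k * q) a) ≤
      ∑ a ∈ range N, ∑ p ∈ P, Nat.dist (r a p) (r (a + 1) p) := by
  have htotal : ∑ j ∈ range q, ∑ k ∈ range K, ∑ a ∈ range N,
        #(levelCrossings P (fun a p => r a p + j) (k * q) a) ≤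
      ∑ a ∈ range N, ∑ p ∈ P, Nat.dist (r a p) (r (a + 1) p) :=
    calc ∑ j ∈ range q, ∑ k ∈ range K, ∑ a ∈ range N,
          #(levelCrossings P (fun a p => r a p + j) (k * q) a)
        = ∑ a ∈ range N, ∑ x ∈ range q ×ˢ range K,
            #(levelCrossings P (fun a p => r a p + x.1) (x.2 * q) a) := by
          rw [← sum_product', sum_comm]
      _ = ∑ a ∈ range N, ∑ p ∈ P, #{x ∈ range q ×ˢ range K |
            ¬ (r a p + x.1 < x.2 * q ↔ r (a + 1) p + x.1 < x.2 * q)} :=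
          sum_congr rfl fun a _ => sum_card_bipartiteAbove_eq_sum_card_bipartiteBelow _
      _ ≤ ∑ a ∈ range N, ∑ p ∈ P, Nat.dist (r a p) (r (a + 1) p) := by
          gcongr; exact card_separating_multiples_le q K _ _
  obtain ⟨j, hj, hle⟩ := exists_le_of_sum_le (nonempty_range_iff.2 hq.ne')
    (show ∑ j ∈ range q, q * ∑ k ∈ range K, ∑ a ∈ range N,
        #(levelCrossings P (fun a p => r a p + j) (k * q) a) ≤
      ∑ _ ∈ range q, ∑ a ∈ range N, ∑ p ∈ P, Nat.dist (r a p) (r (a + 1) p) by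
        rw [← mul_sum, sum_const, card_range, smul_eq_mul]
        exact Nat.mul_le_mul_left q htotal)
  exact ⟨j, mem_range.1 hj, hle⟩

lemma card_exists_rank_mem_Ico_le (P : Finset α) {r : ℕ → α → ℕ}
    (hr : ∀ a, Set.InjOn (r a) P) (lo hi : ℕ) {a₀ a₁ : ℕ} (ha : a₀ ≤ a₁) :
    #{p ∈ P | ∃ a ∈ Icc a₀ a₁, r a p ∈ Ico lo hi} ≤
      (hi - lo) +
        ∑ a ∈ Ico a₀ a₁, (#(levelCrossings P r lo a) + #(levelCrossings P r hi a)) := by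
  classical
  induction a₁, ha using Nat.le_induction with
  | base =>
    rw [Ico_self, sum_empty, add_zero, ← Nat.card_Ico]
    refine card_le_card_of_injOn (r a₀) (fun p hp => ?_) ((hr a₀).mono (by grind))
    simpa using (mem_filter.1 hp).2
  | succ b hb ih =>
    have hcases : ∀ p ∈ P, (∃ a ∈ Icc a₀ (b + 1), r a p ∈ Ico lo hi) →
        (∃ a ∈ Icc a₀ b, r a p ∈ Ico lo hi) ∨
          p ∈ levelCrossings P r lo b ∪ levelCrossings P r hi b := by
      rintro p hpP ⟨a, ha, hra⟩
      simp only [levelCrossings, mem_union, mem_filter, mem_Icc, mem_Ico] at ha hra ⊢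
      by_cases hstay : a ≤ b
      · exact Or.inl ⟨a, ⟨ha.1, hstay⟩, hra⟩
      · obtain rfl : a = b + 1 := by omega
        by_cases hrb : lo ≤ r b p ∧ r b p < hi
        · exact Or.inl ⟨b, ⟨hb, le_rfl⟩, hrb⟩
        · right; grind
    rw [sum_Ico_succ_top hb, ← add_assoc]
    refine (card_le_card (t := {p ∈ P | ∃ a ∈ Icc a₀ b, r a p ∈ Ico lo hi} ∪
      (levelCrossings P r lo b ∪ levelCrossings P r hi b)) fun p hp => ?_).trans
      ((card_union_le _ _).trans (add_le_add ih (card_union_le _ _)))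
    rw [mem_filter] at hp
    exact mem_union.2 ((hcases p hp.1 hp.2).imp_left fun h => mem_filter.2 ⟨hp.1, h⟩)

/-- The number of crossings, before time `a`, of the two levels `k * q` and `(k + 2) * q` that bound
the `k`-th strip. -/
def stripCrossings (P : Finset α) (r : ℕ → α → ℕ) (q k a : ℕ) : ℕ :=
  ∑ i ∈ range a, (#(levelCrossings P r (k * q) i) + #(levelCrossings P r ((k + 2) * q) i))

lemma stripCrossings_mono (P : Finset α) (r : ℕ → α → ℕ) (q k : ℕ) :
    Monotone (stripCrossings P r q k) := fun _ _ h =>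
  sum_le_sum_of_subset (range_mono h)

lemma sum_stripCrossings_le (P : Finset α) (r : ℕ → α → ℕ) (q K N : ℕ) :
    ∑ k ∈ range K, stripCrossings P r q k N ≤
      2 * ∑ k ∈ range (K + 2), ∑ a ∈ range N, #(levelCrossings P r (k * q) a) := by
  simp only [stripCrossings, sum_add_distrib]
  have hlower : ∑ k ∈ range K, ∑ a ∈ range N, #(levelCrossings P r (k * q) a) ≤
      ∑ k ∈ range (K + 2), ∑ a ∈ range N, #(levelCrossings P r (k * q) a) :=
    sum_le_sum_of_subset (range_mono (by omega))
  have hupper : ∑ k ∈ range K, ∑ a ∈ range N, #(levelCrossings P r ((k + 2) * q) a) ≤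
      ∑ k ∈ range (K + 2), ∑ a ∈ range N, #(levelCrossings P r (k * q) a) := by
    rw [sum_range_succ' _ (K + 1), sum_range_succ' _ K, add_assoc]
    exact Nat.le_add_right _ _
  omega

lemma card_strip_cell_le (P : Finset α) {r : ℕ → α → ℕ} (hr : ∀ a, Set.InjOn (r a) P)
    {q : ℕ} (hq : 0 < q) (k v N : ℕ) :
    #{p ∈ P | ∃ a ≤ N, stripCrossings P r q k a / q = v ∧ r a p ∈ Ico (k * q) ((k + 2) * q)} ≤
      3 * q := by
  rcases {a ∈ range (N + 1) | stripCrossings P r q k a / q = v}.eq_empty_or_nonempty with hT | hT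
  · rw [filter_eq_empty_iff] at hT
    rw [filter_false_of_mem, card_empty]
    · exact Nat.zero_le _
    · rintro p - ⟨a, haN, hav, -⟩
      exact hT (mem_range_succ_iff.2 haN) hav
  set T := {a ∈ range (N + 1) | stripCrossings P r q k a / q = v}
  have hfirst := (mem_filter.1 (T.min'_mem hT)).2
  have hlast := (mem_filter.1 (T.max'_mem hT)).2
  have hvisit := card_exists_rank_mem_Ico_le P hr (k * q) ((k + 2) * q) (T.min'_le_max' hT)
  have hsplit : stripCrossings P r q k (T.min' hT) +
      ∑ a ∈ Ico (T.min' hT) (T.max' hT), (#(levelCrossings P r (k * q) a) +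
        #(levelCrossings P r ((k + 2) * q) a)) = stripCrossings P r q k (T.max' hT) :=
    sum_range_add_sum_Ico _ (T.min'_le_max' hT)
  have hsub : {p ∈ P | ∃ a ≤ N, stripCrossings P r q k a / q = v ∧
      r a p ∈ Ico (k * q) ((k + 2) * q)} ⊆
      {p ∈ P | ∃ a ∈ Icc (T.min' hT) (T.max' hT), r a p ∈ Ico (k * q) ((k + 2) * q)} := by
    refine monotone_filter_right _ fun p _ => ?_
    rintro ⟨a, haN, hav, hra⟩
    have haT : a ∈ T := mem_filter.2 ⟨mem_range_succ_iff.2 haN, hav⟩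
    exact ⟨a, mem_Icc.2 ⟨T.min'_le a haT, T.le_max' a haT⟩, hra⟩
  have hwidth : (k + 2) * q - k * q = 2 * q := by rw [← Nat.sub_mul]; congr 1; omega
  have hspent : stripCrossings P r q k (T.max' hT) ≤ stripCrossings P r q k (T.min' hT) + q := by
    have hlt := Nat.lt_div_mul_add (a := stripCrossings P r q k (T.max' hT)) hq
    have hle := Nat.div_mul_le_self (stripCrossings P r q k (T.min' hT)) q
    rw [hlast] at hlt
    rw [hfirst] at hle
    omega
  have := card_le_card hsub
  omega

-- The cell of `l` records the strip in which the window `[b l, b l + q)` starts and, in units of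
-- `q`, how often the boundary of that strip has been crossed by the time `τ l`. So between the
-- first and the last time of a cell at most `q` further points visit the strip.
lemma exists_cells_of_ranks {ι : Type*} (P : Finset α) {r : ℕ → α → ℕ}
    (hr : ∀ a, Set.InjOn (r a) P) {q : ℕ} (hq : 0 < q) (L : Finset ι) (τ b : ι → ℕ) {N K : ℕ}
    (hτ : ∀ l ∈ L, τ l ≤ N) (hb : ∀ l ∈ L, b l < K * q) :
    ∃ κ : ι → ℕ × ℕ,
      q ^ 2 * #(L.image κ) ≤ q ^ 2 * K +
        2 * (q * ∑ k ∈ range (K + 2), ∑ a ∈ range N, #(levelCrossings P r (k * q) a)) ∧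
      ∀ c, #{p ∈ P | ∃ l ∈ L, κ l = c ∧ r (τ l) p ∈ Ico (b l) (b l + q)} ≤ 3 * q := by
  set W := stripCrossings P r q
  refine ⟨fun l => (b l / q, W (b l / q) (τ l) / q), ?_, ?_⟩
  · have hlabels : L.image (fun l => (b l / q, W (b l / q) (τ l) / q)) ⊆
        (range K).biUnion fun k => {k} ×ˢ range (W k N / q + 1) := by
      intro c hc
      obtain ⟨l, hl, rfl⟩ := mem_image.1 hc
      have hmono : W (b l / q) (τ l) / q ≤ W (b l / q) N / q :=
        Nat.div_le_div_right (stripCrossings_mono P r q _ (hτ l hl))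
      simpa [Nat.lt_succ_iff, Nat.div_lt_iff_lt_mul hq, hb l hl] using hmono
    calc q ^ 2 * #(L.image fun l => (b l / q, W (b l / q) (τ l) / q))
        ≤ q ^ 2 * ∑ k ∈ range K, (W k N / q + 1) := by
          gcongr
          refine (card_le_card hlabels).trans (card_biUnion_le.trans_eq ?_)
          simp
      _ = q ^ 2 * K + q * ∑ k ∈ range K, q * (W k N / q) := by
          rw [sum_add_distrib, ← mul_sum, sum_const, card_range, smul_eq_mul, mul_one]; ring
      _ ≤ q ^ 2 * K + q * ∑ k ∈ range K, W k N := by gcongr; exact Nat.mul_div_le _ _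
      _ ≤ q ^ 2 * K + q * (2 * ∑ k ∈ range (K + 2), ∑ a ∈ range N,
            #(levelCrossings P r (k * q) a)) := by gcongr; exact sum_stripCrossings_le P r q K N
      _ = _ := by ring
  · rintro ⟨k, v⟩
    refine (card_le_card (monotone_filter_right _ fun p _ => ?_)).trans
      (card_strip_cell_le P hr hq k v N)
    rintro ⟨l, hl, hκ, hrl⟩
    obtain ⟨rfl, hv⟩ := Prod.mk.inj hκ
    refine ⟨τ l, hτ l hl, hv, Ico_subset_Ico (Nat.div_mul_le_self _ _) ?_ hrl⟩
    have := Nat.lt_div_mul_add (a := b l) hq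
    rw [add_mul]
    omega

end Levels

section PointsAndLines

namespace PtOnLine

variable {p q a b : ℝ × ℝ}

lemma line_eq_of_slope_eq (ha : PtOnLine p a) (hb : PtOnLine p b) (h : a.1 = b.1) : a = b := by
  unfold PtOnLine at ha hb
  rw [h] at ha
  exact Prod.ext h (by linarith)

lemma line_eq (hpa : PtOnLine p a) (hpb : PtOnLine p b) (hqa : PtOnLine q a)
    (hqb : PtOnLine q b) (hpq : p ≠ q) : a = b := by
  refine line_eq_of_slope_eq hpa hpb ?_
  unfold PtOnLine at hpa hpb hqa hqb
  have hx : p.1 - q.1 ≠ 0 := fun hx => hpq <| by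
    have hx : p.1 = q.1 := sub_eq_zero.1 hx
    exact Prod.ext hx (by rw [hpa, hqa, hx])
  exact mul_right_cancel₀ hx (by linarith)

lemma point_eq (hpa : PtOnLine p a) (hpb : PtOnLine p b) (hqa : PtOnLine q a)
    (hqb : PtOnLine q b) (hab : a ≠ b) : p = q :=
  by_contra fun hpq => hab (hpa.line_eq hpb hqa hqb hpq)

end PtOnLine

open scoped Classical in
/-- The set `I(P, 𝓛)` of incidences between the points `P` and the lines `L`. -/
noncomputable def incidences (P L : Finset (ℝ × ℝ)) : Finset ((ℝ × ℝ) × (ℝ × ℝ)) :=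
  (P ×ˢ L).filter fun q => PtOnLine q.1 q.2

open scoped Classical in
/-- The points of `P` on the line `l`. -/
noncomputable def pointsOn (P : Finset (ℝ × ℝ)) (l : ℝ × ℝ) : Finset (ℝ × ℝ) :=
  {p ∈ P | PtOnLine p l}

variable (P L : Finset (ℝ × ℝ))

lemma pointsOn_subset (l : ℝ × ℝ) : pointsOn P l ⊆ P := by
  classical exact filter_subset _ _

lemma card_incidences_eq_sum_card_pointsOn : #(incidences P L) = ∑ l ∈ L, #(pointsOn P l) := by
  simp only [incidences, pointsOn, card_filter, sum_product_right]

lemma sum_card_offDiag_pointsOn_le : ∑ l ∈ L, #(pointsOn P l).offDiag ≤ #P ^ 2 := by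
  rw [← card_biUnion]
  · refine (card_le_card (biUnion_subset.2 fun l _ => offDiag_mono (pointsOn_subset P l))).trans ?_
    rw [offDiag_card, sq]
    exact Nat.sub_le _ _
  · refine fun a _ b _ hab => disjoint_left.2 fun x hxa hxb => hab ?_
    simp only [pointsOn, mem_offDiag, mem_filter] at hxa hxb
    exact hxa.1.2.line_eq hxb.1.2 hxa.2.1.2 hxb.2.1.2 hxa.2.2

lemma card_incidences_le_card_add_sq : #(incidences P L) ≤ #L + #P ^ 2 :=
  calc #(incidences P L) = ∑ l ∈ L, #(pointsOn P l) := card_incidences_eq_sum_card_pointsOn P L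
    _ ≤ ∑ l ∈ L, (1 + #(pointsOn P l).offDiag) := by
        gcongr with l
        rw [offDiag_card, ← Nat.mul_sub_one]
        rcases #(pointsOn P l) with _ | _ | n <;> grind
    _ ≤ #L + #P ^ 2 := by
        rw [sum_add_distrib, sum_const, smul_eq_mul, mul_one]
        gcongr
        exact sum_card_offDiag_pointsOn_le P L

lemma mul_sum_card_pointsOn_le (q : ℕ) :
    q * ∑ l ∈ L with q < #(pointsOn P l), #(pointsOn P l) ≤ #P ^ 2 :=
  calc q * ∑ l ∈ L with q < #(pointsOn P l), #(pointsOn P l)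
      ≤ ∑ l ∈ L with q < #(pointsOn P l), #(pointsOn P l).offDiag := by
        rw [mul_sum]
        refine sum_le_sum fun l hl => ?_
        rw [offDiag_card, ← Nat.mul_sub_one, mul_comm]
        exact Nat.mul_le_mul_left _ (Nat.le_sub_one_of_lt (mem_filter.1 hl).2)
    _ ≤ #P ^ 2 := sum_card_offDiag_pointsOn_le P _

end PointsAndLines

section Grids

lemma exists_injOn_mapsTo_mapsTo {α β : Type*} [Nonempty β] {s t : Finset α} {s' t' : Finset β}
    (hst : Disjoint s t) (hst' : Disjoint s' t') (hs : #s ≤ #s') (ht : #t ≤ #t') :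
    ∃ g : α → β, Set.InjOn g (s ∪ t) ∧ Set.MapsTo g s s' ∧ Set.MapsTo g t t' := by
  classical
  obtain ⟨g₁, hg₁, hinj₁⟩ := s.finite_toSet.exists_injOn_of_encard_le (t := (s' : Set β)) (by simpa)
  obtain ⟨g₂, hg₂, hinj₂⟩ := t.finite_toSet.exists_injOn_of_encard_le (t := (t' : Set β)) (by simpa)
  set g : α → β := (s : Set α).piecewise g₁ g₂
  have hgs : Set.EqOn g g₁ s := Set.piecewise_eqOn _ _ _
  have hgt : Set.EqOn g g₂ t := (Set.piecewise_eqOn_compl _ _ _).mono fun x hx hxs =>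
    disjoint_left.1 hst hxs hx
  have hgs' : Set.MapsTo g s s' := fun x hx => hgs hx ▸ hg₁ hx
  have hgt' : Set.MapsTo g t t' := fun x hx => hgt hx ▸ hg₂ hx
  refine ⟨g, (Set.injOn_union (disjoint_coe.2 hst)).2 ⟨hgs.injOn_iff.2 hinj₁, hgt.injOn_iff.2 hinj₂,
    fun x hx y hy h => ?_⟩, hgs', hgt'⟩
  exact disjoint_left.1 hst' (hgs' hx) (h ▸ hgt' hy)

/-- The points `X (a, b)` form the grid spanned by the two disjoint families of lines `A` and `B`:
they are pairwise distinct, and `X (a, b)` is the intersection of `a` with `b`. -/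
structure IsGrid (A B : Finset (ℝ × ℝ)) (X : (ℝ × ℝ) × (ℝ × ℝ) → ℝ × ℝ) : Prop where
  disjoint : Disjoint A B
  injOn : Set.InjOn X ↑(A ×ˢ B)
  ptOnLine_fst : ∀ x ∈ A ×ˢ B, PtOnLine (X x) x.1
  ptOnLine_snd : ∀ x ∈ A ×ˢ B, PtOnLine (X x) x.2

namespace IsGrid

variable {A B : Finset (ℝ × ℝ)} {X : (ℝ × ℝ) × (ℝ × ℝ) → ℝ × ℝ} {a a' b b' : ℝ × ℝ}

lemma swap (h : IsGrid A B X) : IsGrid B A (X ∘ Prod.swap) where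
  disjoint := h.disjoint.symm
  injOn := by
    refine h.injOn.comp Prod.swap_injective.injOn fun x hx => ?_
    simp_all
  ptOnLine_fst x hx := h.ptOnLine_snd x.swap (by simp_all)
  ptOnLine_snd x hx := h.ptOnLine_fst x.swap (by simp_all)

lemma ptOnLine_iff_left (h : IsGrid A B X) (ha : a ∈ A) (hb : b ∈ B) (ha' : a' ∈ A) :
    PtOnLine (X (a, b)) a' ↔ a' = a := by
  have hab := mk_mem_product ha hb
  have ha'b := mk_mem_product ha' hb
  refine ⟨fun hon => ?_, by rintro rfl; exact h.ptOnLine_fst _ hab⟩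
  have hne : a' ≠ b := fun heq => disjoint_left.1 h.disjoint ha' (heq ▸ hb)
  have hX : X (a', b) = X (a, b) := (h.ptOnLine_fst _ ha'b).point_eq (h.ptOnLine_snd _ ha'b) hon
    (h.ptOnLine_snd _ hab) hne
  exact (Prod.mk.inj (h.injOn ha'b hab hX)).1

lemma ptOnLine_iff_right (h : IsGrid A B X) (ha : a ∈ A) (hb : b ∈ B) (hb' : b' ∈ B) :
    PtOnLine (X (a, b)) b' ↔ b' = b :=
  h.swap.ptOnLine_iff_left hb ha hb'

lemma containsConfig {A₀ B₀ P L : Finset (ℝ × ℝ)} {X₀ : (ℝ × ℝ) × (ℝ × ℝ) → ℝ × ℝ}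
    (h : IsGrid A B X) (h₀ : IsGrid A₀ B₀ X₀) (hA : #A₀ ≤ #A) (hB : #B₀ ≤ #B)
    (hAL : A ⊆ L) (hBL : B ⊆ L) (hXP : ∀ x ∈ A ×ˢ B, X x ∈ P) :
    ContainsConfig P L ((A₀ ×ˢ B₀).image X₀) (A₀ ∪ B₀) := by
  obtain ⟨g, hg, hgA, hgB⟩ := exists_injOn_mapsTo_mapsTo h₀.disjoint h.disjoint hA hB
  have hgAB : ∀ x ∈ A₀ ×ˢ B₀, Prod.map g g x ∈ A ×ˢ B := fun x hx =>
    mk_mem_product (hgA (mem_product.1 hx).1) (hgB (mem_product.1 hx).2)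
  set f : ℝ × ℝ → ℝ × ℝ := X ∘ Prod.map g g ∘ Function.invFunOn X₀ ↑(A₀ ×ˢ B₀)
  have hf : ∀ x ∈ A₀ ×ˢ B₀, f (X₀ x) = X (Prod.map g g x) := fun x hx => by
    simp only [f, Function.comp_apply, h₀.injOn.leftInvOn_invFunOn hx]
  refine ⟨f, g, ?_, by simpa using hg, ?_, ?_, ?_⟩
  · simp only [coe_image]
    rintro _ ⟨x, hx, rfl⟩ _ ⟨y, hy, rfl⟩ hxy
    rw [hf x hx, hf y hy] at hxy
    have hgxy := Prod.ext_iff.1 (h.injOn (hgAB x hx) (hgAB y hy) hxy)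
    rw [mem_coe, mem_product] at hx hy
    exact congrArg X₀ (Prod.ext (hg (.inl hx.1) (.inl hy.1) hgxy.1)
      (hg (.inr hx.2) (.inr hy.2) hgxy.2))
  · simp only [forall_mem_image]
    exact fun x hx => hf x hx ▸ hXP _ (hgAB x hx)
  · intro l hl
    exact (mem_union.1 hl).elim (fun hl => hAL (hgA hl)) fun hl => hBL (hgB hl)
  · simp only [forall_mem_image]
    rintro ⟨a, b⟩ hab l hl
    rw [hf _ hab]
    obtain ⟨ha, hb⟩ := mem_product.1 hab
    rcases mem_union.1 hl with hl | hl
    · rw [h₀.ptOnLine_iff_left ha hb hl, Prod.map, h.ptOnLine_iff_left (hgA ha) (hgB hb) (hgA hl)]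
      exact (hg.eq_iff (.inl hl) (.inl ha)).symm
    · rw [h₀.ptOnLine_iff_right ha hb hl, Prod.map, h.ptOnLine_iff_right (hgA ha) (hgB hb) (hgB hl)]
      exact (hg.eq_iff (.inr hl) (.inr hb)).symm

lemma exists_image_eq {P : Finset (ℝ × ℝ)} (hAB : Disjoint A B) (hcard : #A * #B ≤ #P)
    (hP : ∀ p ∈ P, ∃ a ∈ A, ∃ b ∈ B, PtOnLine p a ∧ PtOnLine p b) :
    ∃ X, IsGrid A B X ∧ (A ×ˢ B).image X = P := by
  choose! φ hφA ψ hψB hφ hψ using hP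
  have hmem : ∀ p ∈ P, (φ p, ψ p) ∈ A ×ˢ B := fun p hp => mk_mem_product (hφA p hp) (hψB p hp)
  have hinj : Set.InjOn (fun p => (φ p, ψ p)) P := fun p hp q hq hpq => by
    obtain ⟨hφpq, hψpq⟩ := Prod.mk.inj hpq
    refine (hφ p hp).point_eq (hψ p hp) (hφpq ▸ hφ q hq) (hψpq ▸ hψ q hq) fun heq => ?_
    exact disjoint_left.1 hAB (hφA p hp) (heq ▸ hψB p hp)
  have himage : P.image (fun p => (φ p, ψ p)) = A ×ˢ B :=
    eq_of_subset_of_card_le (image_subset_iff.2 hmem)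
      (by rwa [card_image_of_injOn hinj, card_product])
  have hbij : Set.BijOn (fun p => (φ p, ψ p)) P ↑(A ×ˢ B) :=
    ⟨hmem, hinj, fun x hx => by simpa [← himage] using hx⟩
  have hinv := hbij.invOn_invFunOn
  set X := Function.invFunOn (fun p => (φ p, ψ p)) (P : Set (ℝ × ℝ))
  have hX : Set.BijOn X ↑(A ×ˢ B) P := hbij.symm hinv.symm
  have hφX : ∀ x ∈ A ×ˢ B, φ (X x) = x.1 ∧ ψ (X x) = x.2 := fun x hx =>
    Prod.ext_iff.1 (hinv.2 hx)
  refine ⟨X, ⟨hAB, hX.injOn, fun x hx => ?_, fun x hx => ?_⟩, ?_⟩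
  · exact (hφX x hx).1 ▸ hφ _ (hX.mapsTo hx)
  · exact (hφX x hx).2 ▸ hψ _ (hX.mapsTo hx)
  · rw [← coe_inj, coe_image, hX.image_eq]

end IsGrid

/-- No `t` lines of `L` together with `t` further lines of `L` span a grid of points of `P`. -/
def GridFree (t : ℕ) (P L : Finset (ℝ × ℝ)) : Prop :=
  ∀ A ⊆ L, ∀ B ⊆ L, #A = t → #B = t → ∀ X, IsGrid A B X → ¬ ∀ x ∈ A ×ˢ B, X x ∈ P

lemma GridFree.mono {t : ℕ} {P P' L L' : Finset (ℝ × ℝ)} (h : GridFree t P L) (hP : P' ⊆ P)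
    (hL : L' ⊆ L) : GridFree t P' L' := fun A hA B hB hAt hBt X hX hXP =>
  h A (hA.trans hL) B (hB.trans hL) hAt hBt X hX fun x hx => hP (hXP x hx)

lemma IsGrid.gridFree_of_not_containsConfig {t : ℕ} {A₀ B₀ P L : Finset (ℝ × ℝ)}
    {X₀ : (ℝ × ℝ) × (ℝ × ℝ) → ℝ × ℝ} (h₀ : IsGrid A₀ B₀ X₀) (hA₀ : #A₀ = t) (hB₀ : #B₀ = t)
    (h : ¬ ContainsConfig P L ((A₀ ×ˢ B₀).image X₀) (A₀ ∪ B₀)) : GridFree t P L :=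
  fun _ hA _ hB hAt hBt _ hX hXP =>
    h (hX.containsConfig h₀ (hA₀.trans hAt.symm).le (hB₀.trans hBt.symm).le hA hB hXP)

end Grids

section ConsecutiveLines

/-- Among the lines of `C` through the point `p`, ordered by slope, `b` comes immediately
after `a`. -/
structure ConsecutiveAt (C : Finset (ℝ × ℝ)) (p a b : ℝ × ℝ) : Prop where
  left : PtOnLine p a
  right : PtOnLine p b
  slope_lt : a.1 < b.1
  slope_le_or_le : ∀ c ∈ C, PtOnLine p c → c.1 ≤ a.1 ∨ b.1 ≤ c.1

namespace ConsecutiveAt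

variable {C : Finset (ℝ × ℝ)} {p a a' b b' : ℝ × ℝ}

lemma ne (h : ConsecutiveAt C p a b) : a ≠ b := fun hab => h.slope_lt.ne (congrArg Prod.fst hab)

lemma right_unique (h : ConsecutiveAt C p a b) (h' : ConsecutiveAt C p a b') (hb : b ∈ C)
    (hb' : b' ∈ C) : b = b' :=
  h.right.line_eq_of_slope_eq h'.right <| le_antisymm
    ((h.slope_le_or_le b' hb' h'.right).resolve_left h'.slope_lt.not_ge)
    ((h'.slope_le_or_le b hb h.right).resolve_left h.slope_lt.not_ge)

lemma left_unique (h : ConsecutiveAt C p a b) (h' : ConsecutiveAt C p a' b) (ha : a ∈ C)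
    (ha' : a' ∈ C) : a = a' :=
  h.left.line_eq_of_slope_eq h'.left <| le_antisymm
    ((h'.slope_le_or_le a ha h.left).resolve_right h.slope_lt.not_ge)
    ((h.slope_le_or_le a' ha' h'.left).resolve_right h'.slope_lt.not_ge)

end ConsecutiveAt

open scoped Classical in
lemma card_incidences_le_card_add_card_consecutive (H C : Finset (ℝ × ℝ)) :
    #(incidences H C) ≤ #H + #{x ∈ C ×ˢ C | ∃ p ∈ H, ConsecutiveAt C p x.1 x.2} := by
  have hpoint : ∀ p, #{l ∈ C | PtOnLine p l} ≤
      #{x ∈ C ×ˢ C | ConsecutiveAt C p x.1 x.2} + 1 := fun p => by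
    have hslope : Set.InjOn Prod.fst (({l ∈ C | PtOnLine p l} : Finset (ℝ × ℝ)) : Set (ℝ × ℝ)) :=
      fun a ha b hb => (mem_filter.1 ha).2.line_eq_of_slope_eq (mem_filter.1 hb).2
    refine (card_le_card_consecutive_pairs_add_one _ hslope).trans
      (Nat.add_le_add_right (card_le_card fun x hx => ?_) 1)
    simp only [mem_filter, mem_product] at hx ⊢
    exact ⟨⟨hx.1.1.1, hx.1.2.1⟩, hx.1.1.2, hx.1.2.2, hx.2.1, fun c hc hpc => hx.2.2 c ⟨hc, hpc⟩⟩
  have hdisj : (H : Set (ℝ × ℝ)).PairwiseDisjoint fun p =>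
      {x ∈ C ×ˢ C | ConsecutiveAt C p x.1 x.2} :=
    fun p _ q _ hpq => disjoint_left.2 fun x hx hx' => hpq <|
      have hp := (mem_filter.1 hx).2
      have hq := (mem_filter.1 hx').2
      hp.left.point_eq hp.right hq.left hq.right hp.ne
  calc #(incidences H C) = ∑ p ∈ H, #{l ∈ C | PtOnLine p l} := by
        simp only [incidences, card_filter, sum_product]
    _ ≤ ∑ p ∈ H, (#{x ∈ C ×ˢ C | ConsecutiveAt C p x.1 x.2} + 1) := by
        gcongr with p; exact hpoint p
    _ = #H + #{x ∈ C ×ˢ C | ∃ p ∈ H, ConsecutiveAt C p x.1 x.2} := by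
        rw [sum_add_distrib, ← card_biUnion hdisj, sum_const, smul_eq_mul, mul_one, add_comm]
        congr 2
        ext
        simp only [mem_biUnion, mem_filter]
        grind

variable {t : ℕ} {H C : Finset (ℝ × ℝ)}

open scoped Classical in
lemma GridFree.card_common_consecutive_le (h : GridFree t H C) (ht : 0 < t)
    {S : Finset (ℝ × ℝ)} (hS : S ⊆ C) (hSt : #S = t) :
    #{b ∈ C | ∀ a ∈ S, ∃ p ∈ H, ConsecutiveAt C p a b} ≤ t ^ 3 := by
  set B := {b ∈ C | ∀ a ∈ S, ∃ p ∈ H, ConsecutiveAt C p a b}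
  have hBC : B ⊆ C := filter_subset _ _
  have hB : ∀ x : (ℝ × ℝ) × (ℝ × ℝ), x.1 ∈ S → x.2 ∈ B →
      ∃ p ∈ H, ConsecutiveAt C p x.1 x.2 := fun x hx hx' => (mem_filter.1 hx').2 x.1 hx
  choose! X hXH hX using hB
  obtain ⟨B', hB', hinj, hcard⟩ := exists_subset_injOn_product_and_card_le S B X
    (card_pos.1 (hSt ▸ ht))
    (fun a ha b hb b' hb' heq => (hX (a, b) ha hb).right_unique (heq ▸ hX (a, b') ha hb')
      (hBC hb) (hBC hb'))
    (fun a ha a' ha' b hb heq => (hX (a, b) ha hb).left_unique (heq ▸ hX (a', b) ha' hb)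
      (hS ha) (hS ha'))
  have hsmall : #B' < t := by
    by_contra! hle
    obtain ⟨B'', hB'', hB''t⟩ := exists_subset_card_eq hle
    have hmem : ∀ x ∈ S ×ˢ B'', x.1 ∈ S ∧ x.2 ∈ B := fun x hx =>
      (mem_product.1 hx).imp_right fun hx => hB' (hB'' hx)
    have hconsec : ∀ x ∈ S ×ˢ B'', ConsecutiveAt C (X x) x.1 x.2 := fun x hx =>
      hX x (hmem x hx).1 (hmem x hx).2
    refine h S hS B'' (hB''.trans (hB'.trans hBC)) hSt hB''t X
      ⟨?_, hinj.mono (product_subset_product_right hB''), fun x hx => (hconsec x hx).left,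
        fun x hx => (hconsec x hx).right⟩ fun x hx => hXH x (hmem x hx).1 (hmem x hx).2
    exact disjoint_left.2 fun a ha ha' => (hconsec (a, a) (mk_mem_product ha ha')).ne rfl
  calc #B ≤ #B' * t ^ 2 := hSt ▸ hcard
    _ ≤ t * t ^ 2 := by gcongr
    _ = t ^ 3 := by ring

lemma GridFree.card_incidences_le_card_add_rpow (h : GridFree t H C) (ht : 0 < t) :
    (#(incidences H C) : ℝ) ≤
      #H + (((t : ℝ) ^ 3) ^ (t : ℝ)⁻¹ + t) * (#C : ℝ) ^ (2 - (t : ℝ)⁻¹) := by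
  classical
  have hedges := card_edges_le_of_card_common_le C C (fun a b => ∃ p ∈ H, ConsecutiveAt C p a b)
    ht fun S hS hSt => h.card_common_consecutive_le ht hS hSt
  have hcard : (#(incidences H C) : ℝ) ≤
      #H + #{x ∈ C ×ˢ C | ∃ p ∈ H, ConsecutiveAt C p x.1 x.2} :=
    mod_cast card_incidences_le_card_add_card_consecutive H C
  have ht' : (t : ℝ)⁻¹ ≤ 1 := Nat.cast_inv_le_one t
  have hpow : (#C : ℝ) * (#C : ℝ) ^ (1 - (t : ℝ)⁻¹) = (#C : ℝ) ^ (2 - (t : ℝ)⁻¹) := by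
    rw [show (2 : ℝ) - (t : ℝ)⁻¹ = 1 + (1 - (t : ℝ)⁻¹) by ring,
      Real.rpow_add' (Nat.cast_nonneg _) (by linarith), Real.rpow_one]
  have hlin : (#C : ℝ) ≤ (#C : ℝ) ^ (2 - (t : ℝ)⁻¹) :=
    natCast_le_natCast_rpow #C (by linarith)
  push_cast at hedges
  calc (#(incidences H C) : ℝ)
      ≤ #H + (((t : ℝ) ^ 3) ^ (t : ℝ)⁻¹ * ((#C : ℝ) * (#C : ℝ) ^ (1 - (t : ℝ)⁻¹)) + t * #C) := by
        linarith
    _ ≤ #H + (((t : ℝ) ^ 3) ^ (t : ℝ)⁻¹ * (#C : ℝ) ^ (2 - (t : ℝ)⁻¹) +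
          t * (#C : ℝ) ^ (2 - (t : ℝ)⁻¹)) := by
        rw [hpow]; gcongr
    _ = #H + (((t : ℝ) ^ 3) ^ (t : ℝ)⁻¹ + t) * (#C : ℝ) ^ (2 - (t : ℝ)⁻¹) := by ring

end ConsecutiveLines

section Sweep

/-- The sort key by which a sweeping line of slope `s`, moving upwards, meets the point `p`: its
intercept on passing through `p`. Ties are broken by a fixed linear order of the plane. -/
def sweepKey (s : ℝ) (p : ℝ × ℝ) : ℝ ×ₗ ℝ ×ₗ ℝ := toLex (p.2 - s * p.1, toLex p)

lemma sweepKey_injective (s : ℝ) : Function.Injective (sweepKey s) := fun _ _ h =>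
  congrArg (fun k : ℝ ×ₗ ℝ ×ₗ ℝ => ofLex (ofLex k).2) h

lemma sweepKey_lt_sweepKey_iff {s : ℝ} {p q : ℝ × ℝ} : sweepKey s p < sweepKey s q ↔
    p.2 - q.2 < s * (p.1 - q.1) ∨
      p.2 - q.2 = s * (p.1 - q.1) ∧ (p.1 < q.1 ∨ p.1 = q.1 ∧ p.2 < q.2) := by
  simp only [sweepKey, Prod.Lex.toLex_lt_toLex]
  refine or_congr ?_ (and_congr_left' ?_) <;> constructor <;> intro <;> linarith

lemma monotone_or_antitone_sweepKey_lt (p q : ℝ × ℝ) :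
    Monotone (fun s => sweepKey s p < sweepKey s q) ∨
      Antitone (fun s => sweepKey s p < sweepKey s q) := by
  simp only [sweepKey_lt_sweepKey_iff]
  rcases lt_trichotomy p.1 q.1 with hlt | heq | hgt
  · right
    intro s s' hs h
    have : s' * (p.1 - q.1) ≤ s * (p.1 - q.1) := mul_le_mul_of_nonpos_right hs (by linarith)
    rcases h with h | h
    · exact .inl (h.trans_le this)
    · grind
  · left
    simpa only [heq, sub_self, mul_zero] using monotone_const
  · left
    intro s s' hs h
    have : s * (p.1 - q.1) ≤ s' * (p.1 - q.1) := mul_le_mul_of_nonneg_right hs (by linarith)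
    grind

/-- The number of points of `P` that a sweeping line of slope `s` meets before `p`. -/
noncomputable def sweepRank (P : Finset (ℝ × ℝ)) (s : ℝ) (p : ℝ × ℝ) : ℕ :=
  #{p' ∈ P | sweepKey s p' < sweepKey s p}

/-- The points of `P` strictly below the line `l`. -/
noncomputable def pointsBelow (P : Finset (ℝ × ℝ)) (l : ℝ × ℝ) : Finset (ℝ × ℝ) :=
  {p ∈ P | p.2 < l.1 * p.1 + l.2}

variable (P L : Finset (ℝ × ℝ))

lemma injOn_sweepRank (s : ℝ) : Set.InjOn (sweepRank P s) P := by
  have hlt : ∀ p ∈ P, ∀ q, sweepKey s p < sweepKey s q → sweepRank P s p < sweepRank P s q := by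
    intro p hp q hpq
    refine card_lt_card (ssubset_iff_of_subset (monotone_filter_right _ fun x _ hx => ?_) |>.2
      ⟨p, by simp [hp, hpq]⟩)
    exact hx.trans hpq
  intro p hp q hq h
  rcases lt_trichotomy (sweepKey s p) (sweepKey s q) with hpq | hpq | hpq
  · exact absurd h (hlt p hp q hpq).ne
  · exact sweepKey_injective s hpq
  · exact absurd h (hlt q hq p hpq).ne'

variable {P} in
lemma PtOnLine.sweepRank_mem_Ico {p l : ℝ × ℝ} (h : PtOnLine p l) (hp : p ∈ P) :
    sweepRank P l.1 p ∈ Ico #(pointsBelow P l) (#(pointsBelow P l) + #(pointsOn P l)) := by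
  classical
  have hkey : ∀ p', sweepKey l.1 p' < sweepKey l.1 p →
      p'.2 < l.1 * p'.1 + l.2 ∨ PtOnLine p' l := fun p' hp' => by
    rw [sweepKey_lt_sweepKey_iff] at hp'
    unfold PtOnLine at h ⊢
    rcases hp' with hp' | hp'
    · left; linarith
    · right; linarith [hp'.1]
  rw [mem_Ico]
  constructor
  · refine card_le_card (monotone_filter_right _ fun p' _ hp' => ?_)
    rw [sweepKey_lt_sweepKey_iff]
    unfold PtOnLine at h
    left; linarith
  · have hsub : {p' ∈ P | sweepKey l.1 p' < sweepKey l.1 p} ⊆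
        pointsBelow P l ∪ (pointsOn P l).erase p := fun p' hp' => by
      obtain ⟨hp'P, hlt⟩ := mem_filter.1 hp'
      rw [mem_union, pointsBelow, pointsOn, mem_erase, mem_filter, mem_filter]
      exact (hkey p' hlt).imp (⟨hp'P, ·⟩) (⟨fun heq => (heq ▸ hlt).false, hp'P, ·⟩)
    have hpon : p ∈ pointsOn P l := mem_filter.2 ⟨hp, h⟩
    calc sweepRank P l.1 p ≤ #(pointsBelow P l) + #((pointsOn P l).erase p) :=
          (card_le_card hsub).trans (card_union_le _ _)
      _ < #(pointsBelow P l) + #(pointsOn P l) :=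
          Nat.add_lt_add_left (card_erase_lt_of_mem hpon) _

open scoped Classical in
lemma exists_cells {q : ℕ} (hq : 0 < q) (hqP : q ≤ #P) (hL : ∀ l ∈ L, #(pointsOn P l) ≤ q) :
    ∃ κ : ℝ × ℝ → ℕ × ℕ, q ^ 2 * #(L.image κ) ≤ 5 * #P ^ 2 ∧
      ∀ c, #{p ∈ P | ∃ l ∈ L, κ l = c ∧ PtOnLine p l} ≤ 3 * q := by
  obtain ⟨u, N, hu, huL⟩ := exists_monotone_enumeration (L.image Prod.fst)
  choose! τ hτN hτ using fun l (hl : l ∈ L) => huL l.1 (mem_image_of_mem _ hl)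
  have hflip : ∀ p p', Monotone (fun a => sweepKey (u a) p < sweepKey (u a) p') ∨
      Antitone (fun a => sweepKey (u a) p < sweepKey (u a) p') := fun p p' =>
    (monotone_or_antitone_sweepKey_lt p p').imp (·.comp hu) (·.comp_monotone hu)
  obtain ⟨j, hj, hcross⟩ := exists_shift_mul_sum_card_levelCrossings_le P
    (fun a => sweepRank P (u a)) N (#P / q + 4) hq
  have hwidth : #P < #P / q * q + q := Nat.lt_div_mul_add hq
  obtain ⟨κ, hcells, hcell⟩ := exists_cells_of_ranks P (r := fun a p => sweepRank P (u a) p + j)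
    (fun a => (add_left_injective j).comp_injOn (injOn_sweepRank P (u a))) hq L τ
    (fun l => #(pointsBelow P l) + j) (K := #P / q + 2) hτN fun l _ => by
      have : #(pointsBelow P l) ≤ #P := card_filter_le _ _
      rw [add_mul]
      omega
  refine ⟨κ, ?_, fun c => (card_le_card (monotone_filter_right _ fun p hp => ?_)).trans (hcell c)⟩
  · have hmul : q * (#P / q) ≤ #P := Nat.mul_div_le _ _
    have hsweep := hcross.trans
      (sum_dist_card_filter_le P (fun a p p' => sweepKey (u a) p < sweepKey (u a) p') hflip N)
    calc q ^ 2 * #(L.image κ) ≤ q ^ 2 * (#P / q + 2) + 2 * #P ^ 2 :=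
          hcells.trans (by gcongr)
      _ = q * (q * (#P / q)) + 2 * q ^ 2 + 2 * #P ^ 2 := by ring
      _ ≤ #P * #P + 2 * #P ^ 2 + 2 * #P ^ 2 := by gcongr
      _ = 5 * #P ^ 2 := by ring
  · rintro ⟨l, hl, hκ, hpl⟩
    refine ⟨l, hl, hκ, ?_⟩
    have hwindow := hpl.sweepRank_mem_Ico hp
    have := hL l hl
    rw [mem_Ico] at hwindow ⊢
    rw [hτ l hl]
    omega

end Sweep

section Amplification

variable {P L : Finset (ℝ × ℝ)} {K e : ℝ}

lemma card_incidences_le_of_card_pointsOn_le {q g : ℕ} (hq : 0 < q) (hqP : q ≤ #P) (hg : 0 < g)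
    (hL : ∀ l ∈ L, #(pointsOn P l) ≤ q) (hK : 0 ≤ K) (he : 0 ≤ e)
    (h : ∀ H ⊆ P, ∀ C ⊆ L, (#(incidences H C) : ℝ) ≤ #H + K * (#C : ℝ) ^ e) :
    (#(incidences P L) : ℝ) ≤
      (5 * #P ^ 2 / q ^ 2 + #L / g) * (3 * q + K * (g : ℝ) ^ e) := by
  classical
  obtain ⟨κ, hcells, hcell⟩ := exists_cells P L hq hqP hL
  have hclass : ∀ c, ∑ l ∈ L with κ l = c, (#(pointsOn P l) : ℝ) ≤
      (1 + (#{l ∈ L | κ l = c} : ℝ) / g) * (3 * q + K * (g : ℝ) ^ e) := fun c => by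
    refine sum_le_one_add_card_div_mul _ _ hg fun s hs hsg => ?_
    set H := {p ∈ P | ∃ l ∈ L, κ l = c ∧ PtOnLine p l}
    have hH : #H ≤ 3 * q := hcell c
    have hon : ∀ l ∈ s, pointsOn P l ⊆ pointsOn H l := fun l hl p hp => by
      obtain ⟨hpP, hpl⟩ := mem_filter.1 hp
      obtain ⟨hlL, hlc⟩ := mem_filter.1 (hs hl)
      exact mem_filter.2 ⟨mem_filter.2 ⟨hpP, l, hlL, hlc, hpl⟩, hpl⟩
    calc ∑ l ∈ s, (#(pointsOn P l) : ℝ) ≤ ∑ l ∈ s, (#(pointsOn H l) : ℝ) :=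
          sum_le_sum fun l hl => mod_cast card_le_card (hon l hl)
      _ = #(incidences H s) := by
          rw [card_incidences_eq_sum_card_pointsOn, Nat.cast_sum]
      _ ≤ #H + K * (#s : ℝ) ^ e := h H (filter_subset _ _) s (hs.trans (filter_subset _ _))
      _ ≤ 3 * q + K * (g : ℝ) ^ e := by gcongr; exact_mod_cast hH
  have hnumber : (#(L.image κ) : ℝ) ≤ 5 * #P ^ 2 / q ^ 2 := by
    rw [le_div_iff₀' (by positivity)]
    exact_mod_cast hcells
  calc (#(incidences P L) : ℝ)
      = ∑ c ∈ L.image κ, ∑ l ∈ L with κ l = c, (#(pointsOn P l) : ℝ) := by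
        rw [sum_fiberwise_of_maps_to fun l hl => mem_image_of_mem κ hl,
          card_incidences_eq_sum_card_pointsOn, Nat.cast_sum]
    _ ≤ ∑ c ∈ L.image κ,
          (1 + (#{l ∈ L | κ l = c} : ℝ) / g) * (3 * q + K * (g : ℝ) ^ e) :=
        sum_le_sum fun c _ => hclass c
    _ = (#(L.image κ) + #L / g) * (3 * q + K * (g : ℝ) ^ e) := by
        rw [← sum_mul, sum_add_distrib, ← sum_div, ← Nat.cast_sum,
          ← card_eq_sum_card_image, sum_const, nsmul_eq_mul, mul_one]
    _ ≤ (5 * #P ^ 2 / q ^ 2 + #L / g) * (3 * q + K * (g : ℝ) ^ e) := by gcongr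

lemma card_incidences_le_of_cells {q g : ℕ} (hq : 0 < q) (hqP : q ≤ #P) (hg : 0 < g)
    (hK : 0 ≤ K) (he : 0 ≤ e)
    (h : ∀ H ⊆ P, ∀ C ⊆ L, (#(incidences H C) : ℝ) ≤ #H + K * (#C : ℝ) ^ e) :
    (#(incidences P L) : ℝ) ≤
      #P ^ 2 / q + (5 * #P ^ 2 / q ^ 2 + #L / g) * (3 * q + K * (g : ℝ) ^ e) := by
  set L' := {l ∈ L | #(pointsOn P l) ≤ q}
  have hL' : L' ⊆ L := filter_subset _ _
  have hrich : ∑ l ∈ L with q < #(pointsOn P l), (#(pointsOn P l) : ℝ) ≤ #P ^ 2 / q := by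
    rw [le_div_iff₀' (by positivity)]
    exact_mod_cast mul_sum_card_pointsOn_le P L q
  have hpoor := card_incidences_le_of_card_pointsOn_le (L := L') hq hqP hg
    (fun l hl => (mem_filter.1 hl).2) hK he fun H hH C hC => h H hH C (hC.trans hL')
  calc (#(incidences P L) : ℝ)
      = ∑ l ∈ L with q < #(pointsOn P l), (#(pointsOn P l) : ℝ) + #(incidences P L') := by
        rw [card_incidences_eq_sum_card_pointsOn, card_incidences_eq_sum_card_pointsOn,
          Nat.cast_sum, Nat.cast_sum,
          ← sum_filter_not_add_sum_filter L fun l => #(pointsOn P l) ≤ q]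
        simp only [not_le, L']
    _ ≤ #P ^ 2 / q + (5 * #P ^ 2 / q ^ 2 + #L' / g) * (3 * q + K * (g : ℝ) ^ e) := by gcongr
    _ ≤ #P ^ 2 / q + (5 * #P ^ 2 / q ^ 2 + #L / g) * (3 * q + K * (g : ℝ) ^ e) := by gcongr

lemma card_incidences_le_of_balanced {g : ℝ} (hg : 1 ≤ g)
    (hbal : (#P : ℝ) ^ 2 = #L * g ^ (2 * e - 1))
    (hgP : g ^ e ≤ #P) (hK : 0 ≤ K) (he : 0 ≤ e) (he2 : e ≤ 2)
    (h : ∀ H ⊆ P, ∀ C ⊆ L, (#(incidences H C) : ℝ) ≤ #H + K * (#C : ℝ) ^ e) :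
    (#(incidences P L) : ℝ) ≤ (37 + 24 * K) * (#L * g ^ (e - 1)) := by
  have hg₀ : 0 < g := by linarith
  have hge : 1 ≤ g ^ e := Real.one_le_rpow hg he
  have hq₂ : (⌈g ^ e⌉₊ : ℝ) ≤ 2 * g ^ e := Nat.ceil_le_two_mul (by linarith)
  have hg₂ : (⌈g⌉₊ : ℝ) ≤ 2 * g := Nat.ceil_le_two_mul (by linarith)
  have hgpow : (⌈g⌉₊ : ℝ) ^ e ≤ 4 * g ^ e :=
    calc (⌈g⌉₊ : ℝ) ^ e ≤ (2 * g) ^ e := by gcongr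
      _ = (2 : ℝ) ^ e * g ^ e := Real.mul_rpow zero_le_two hg₀.le
      _ ≤ (2 : ℝ) ^ (2 : ℝ) * g ^ e := by gcongr; exact one_le_two
      _ = 4 * g ^ e := by norm_num
  have hpairs : (#P : ℝ) ^ 2 / g ^ e = #L * g ^ (e - 1) := by
    rw [hbal, mul_div_assoc, ← Real.rpow_sub hg₀]
    ring_nf
  have hlines : #L / g * g ^ e = #L * g ^ (e - 1) := by
    rw [Real.rpow_sub_one hg₀.ne']
    ring
  have hsum : (5 * #P ^ 2 / (g ^ e) ^ 2 + #L / g) * g ^ e = 6 * (#L * g ^ (e - 1)) := by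
    rw [add_mul, hlines, sq (g ^ e), ← div_div, div_mul_cancel₀ _ (by positivity), mul_div_assoc,
      hpairs]
    ring
  have hbound := card_incidences_le_of_cells (q := ⌈g ^ e⌉₊) (g := ⌈g⌉₊)
    (Nat.ceil_pos.2 (by positivity)) (Nat.ceil_le.2 hgP) (Nat.ceil_pos.2 hg₀) hK he h
  calc (#(incidences P L) : ℝ) ≤ _ := hbound
    _ ≤ #P ^ 2 / g ^ e +
          (5 * #P ^ 2 / (g ^ e) ^ 2 + #L / g) * (3 * (2 * g ^ e) + K * (4 * g ^ e)) := by
        gcongr <;> exact Nat.le_ceil _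
    _ = #P ^ 2 / g ^ e + ((5 * #P ^ 2 / (g ^ e) ^ 2 + #L / g) * g ^ e) * (6 + 4 * K) := by ring
    _ = (37 + 24 * K) * (#L * g ^ (e - 1)) := by rw [hpairs, hsum]; ring

lemma rpow_le_of_lt_rpow {m n g : ℝ} (hm : 0 < m) (hn : 0 ≤ n) (hg : 0 ≤ g) (he : 1 / 2 ≤ e)
    (hbal : m ^ 2 = n * g ^ (2 * e - 1)) (hmg : m < g ^ e) : n ^ e ≤ m := by
  have hpow : 0 < m ^ (2 * e - 1) := by positivity
  refine le_of_mul_le_mul_right ?_ hpow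
  calc n ^ e * m ^ (2 * e - 1) ≤ n ^ e * (g ^ e) ^ (2 * e - 1) := by gcongr; linarith
    _ = (n * g ^ (2 * e - 1)) ^ e := by
        rw [Real.mul_rpow hn (by positivity), ← Real.rpow_mul hg, ← Real.rpow_mul hg, mul_comm e]
    _ = m ^ (2 * e) := by rw [← hbal, ← Real.rpow_natCast_mul hm.le, Nat.cast_ofNat]
    _ = m * m ^ (2 * e - 1) := by
        rw [Real.rpow_sub_one hm.ne']
        field_simp

lemma mul_div_rpow_rpow {m n : ℝ} (hm : 0 ≤ m) (hn : 0 < n) (he : 2 * e - 1 ≠ 0) :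
    n * ((m ^ 2 / n) ^ (2 * e - 1)⁻¹) ^ (e - 1) =
      m ^ ((2 * e - 2) / (2 * e - 1)) * n ^ (e / (2 * e - 1)) := by
  have hm_exp : (2 : ℕ) * ((2 * e - 1)⁻¹ * (e - 1)) = (2 * e - 2) / (2 * e - 1) := by
    push_cast; ring
  have hn_exp : 1 - (2 * e - 1)⁻¹ * (e - 1) = e / (2 * e - 1) := by field_simp; ring
  rw [← Real.rpow_mul (by positivity), Real.div_rpow (by positivity) hn.le,
    ← Real.rpow_natCast_mul hm, hm_exp, ← hn_exp, Real.rpow_sub hn, Real.rpow_one]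
  ring

lemma card_incidences_le_of_forall_subset (hK : 0 ≤ K) (he : 1 / 2 < e) (he2 : e ≤ 2)
    (h : ∀ H ⊆ P, ∀ C ⊆ L, (#(incidences H C) : ℝ) ≤ #H + K * (#C : ℝ) ^ e) :
    (#(incidences P L) : ℝ) ≤ (37 + 24 * K) *
      ((#P : ℝ) ^ ((2 * e - 2) / (2 * e - 1)) * (#L : ℝ) ^ (e / (2 * e - 1)) + #P + #L) := by
  set M := (#P : ℝ) ^ ((2 * e - 2) / (2 * e - 1)) * (#L : ℝ) ^ (e / (2 * e - 1))
  have hM₀ : 0 ≤ M := by positivity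
  have hKM : 0 ≤ K * (M + #P + #L) := by positivity
  have hexp : 0 < 2 * e - 1 := by linarith
  rcases le_or_gt ((#P : ℝ) ^ 2) #L with hfew | hmany
  · have hpairs : (#(incidences P L) : ℝ) ≤ #L + #P ^ 2 :=
      mod_cast card_incidences_le_card_add_sq P L
    linarith [Nat.cast_nonneg (α := ℝ) #P]
  rcases L.eq_empty_or_nonempty with rfl | hL
  · rw [card_incidences_eq_sum_card_pointsOn, sum_empty, Nat.cast_zero]
    positivity
  have hn : (0 : ℝ) < #L := mod_cast hL.card_pos
  have hm : (0 : ℝ) < #P := pos_of_mul_pos_left (hn.trans (by rwa [← sq])) (by positivity)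
  set g : ℝ := ((#P : ℝ) ^ 2 / #L) ^ (2 * e - 1)⁻¹
  have hg₁ : 1 ≤ g :=
    Real.one_le_rpow ((one_le_div hn).2 hmany.le) (inv_nonneg.2 hexp.le)
  have hbal : (#P : ℝ) ^ 2 = #L * g ^ (2 * e - 1) := by
    rw [Real.rpow_inv_rpow (by positivity) hexp.ne', mul_div_cancel₀ _ hn.ne']
  rcases le_or_gt (g ^ e) #P with hgP | hgP
  · have hbound := card_incidences_le_of_balanced hg₁ hbal hgP hK (by linarith) he2 h
    rw [mul_div_rpow_rpow hm.le hn hexp.ne'] at hbound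
    exact hbound.trans (by gcongr; linarith)
  · have hpow : (#L : ℝ) ^ e ≤ #P :=
      rpow_le_of_lt_rpow hm hn.le (zero_le_one.trans hg₁) he.le hbal hgP
    calc (#(incidences P L) : ℝ) ≤ #P + K * (#L : ℝ) ^ e := h P Subset.rfl L Subset.rfl
      _ ≤ #P + K * #P := by gcongr
      _ ≤ (37 + 24 * K) * (M + #P + #L) := by
            nlinarith

end Amplification

lemma GridFree.card_incidences_le {t : ℕ} (ht : 0 < t) {P L : Finset (ℝ × ℝ)}
    (h : GridFree t P L) :
    (#(incidences P L) : ℝ) ≤ (37 + 24 * (((t : ℝ) ^ 3) ^ (t : ℝ)⁻¹ + t)) *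
      ((#P : ℝ) ^ ((2 * (t : ℝ) - 2) / (3 * (t : ℝ) - 2)) *
        (#L : ℝ) ^ ((2 * (t : ℝ) - 1) / (3 * (t : ℝ) - 2)) + #P + #L) := by
  have ht₀ : (0 : ℝ) < t := mod_cast ht
  have hinv : (t : ℝ)⁻¹ ≤ 1 := Nat.cast_inv_le_one t
  have hden : 2 * (2 - (t : ℝ)⁻¹) - 1 = (3 * t - 2) / t := by field_simp; ring
  have hexp₁ : (2 * (2 - (t : ℝ)⁻¹) - 2) / (2 * (2 - (t : ℝ)⁻¹) - 1) =
      (2 * t - 2) / (3 * t - 2) := by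
    rw [hden, show 2 * (2 - (t : ℝ)⁻¹) - 2 = (2 * t - 2) / t by field_simp; ring,
      div_div_div_cancel_right₀ ht₀.ne']
  have hexp₂ : (2 - (t : ℝ)⁻¹) / (2 * (2 - (t : ℝ)⁻¹) - 1) = (2 * t - 1) / (3 * t - 2) := by
    rw [hden, show 2 - (t : ℝ)⁻¹ = (2 * t - 1) / t by field_simp,
      div_div_div_cancel_right₀ ht₀.ne']
  rw [← hexp₁, ← hexp₂]
  refine card_incidences_le_of_forall_subset (by positivity) (by linarith)
    (by linarith [inv_pos.2 ht₀]) fun H hH C hC => ?_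
  exact (h.mono hH hC).card_incidences_le_card_add_rpow ht

theorem stmt16_general (t : ℕ) (ht : 0 < t) (L₁ L₂ : Finset (ℝ × ℝ))
    (h1 : L₁.card = t) (h2 : L₂.card = t) (hd : Disjoint L₁ L₂)
    (P₀ : Finset (ℝ × ℝ))
    (hP₀ : (↑P₀ : Set (ℝ × ℝ)) =
      {p : ℝ × ℝ | ∃ l₁ ∈ L₁, ∃ l₂ ∈ L₂, PtOnLine p l₁ ∧ PtOnLine p l₂})
    (hcard : P₀.card = t ^ 2) :
    ∃ c : ℝ, 0 < c ∧ ∀ P L : Finset (ℝ × ℝ),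
      ¬ ContainsConfig P L P₀ (L₁ ∪ L₂) →
      (#(incidences P L) : ℝ) ≤
        c * ((#P : ℝ) ^ ((2 * (t : ℝ) - 2) / (3 * (t : ℝ) - 2)) *
               (#L : ℝ) ^ ((2 * (t : ℝ) - 1) / (3 * (t : ℝ) - 2)) + #P + #L) := by
  obtain ⟨X₀, hX₀, rfl⟩ := IsGrid.exists_image_eq hd (by rw [h1, h2, hcard, sq])
    fun p hp => hP₀.subset (mem_coe.2 hp)
  refine ⟨37 + 24 * (((t : ℝ) ^ 3) ^ (t : ℝ)⁻¹ + t), by positivity, fun P L hfree => ?_⟩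
  exact (hX₀.gridFree_of_not_containsConfig h1 h2 hfree).card_incidences_le ht

open scoped Classical in
/-- Theorem 1.3: for fixed `t > 1`, sets `L₁, L₂` of `t` lines whose `t²` pairwise
red–blue intersection points form `P₀`, any `m` points and `n` lines containing no
subconfiguration isomorphic to `(P₀, L₁ ∪ L₂)` determine at most
`c (m^{(2t−2)/(3t−2)} n^{(2t−1)/(3t−2)} + m^{1+1/(6t−3)} + n)` incidences. -/
theorem stmt16 (t : ℕ) (ht : 1 < t) (L₁ L₂ : Finset (ℝ × ℝ))
    (h1 : L₁.card = t) (h2 : L₂.card = t) (hd : Disjoint L₁ L₂)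
    (P₀ : Finset (ℝ × ℝ))
    (hP₀ : (↑P₀ : Set (ℝ × ℝ)) =
      {p : ℝ × ℝ | ∃ l₁ ∈ L₁, ∃ l₂ ∈ L₂, PtOnLine p l₁ ∧ PtOnLine p l₂})
    (hcard : P₀.card = t ^ 2) :
    ∃ c : ℝ, 0 < c ∧ ∀ P L : Finset (ℝ × ℝ),
      ¬ ContainsConfig P L P₀ (L₁ ∪ L₂) →
      (((P ×ˢ L).filter fun q => PtOnLine q.1 q.2).card : ℝ) ≤
        c * ((P.card : ℝ) ^ ((2 * (t : ℝ) - 2) / (3 * (t : ℝ) - 2)) *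
               (L.card : ℝ) ^ ((2 * (t : ℝ) - 1) / (3 * (t : ℝ) - 2)) +
             (P.card : ℝ) ^ ((1 : ℝ) + 1 / (6 * (t : ℝ) - 3)) + (L.card : ℝ)) := by
  obtain ⟨c, hc, h⟩ := stmt16_general t (by omega) L₁ L₂ h1 h2 hd P₀ hP₀ hcard
  have ht' : (1 : ℝ) < t := mod_cast ht
  refine ⟨c, hc, fun P L hfree => (h P L hfree).trans ?_⟩
  gcongr
  exact natCast_le_natCast_rpow _ (le_add_of_nonneg_right (one_div_nonneg.2 (by linarith)))
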